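/- arXiv:1012.1237 — 3 statements merged into one kernel-verified Lean document; each statement's English description precedes it below -/
import Mathlib

section
/- Let n ≥ 2 and let t : {1,…,2n} → {A,B} be a type assignment with t(1)=B and t(2n)=A. Then persons 1 and 2n are each other's most-preferred person, every stable matching of the instance contains the pair {1,2n}, and the stable matchings of the instance are exactly the sets M' ∪ {{1,2n}} where M' ranges over the stable matchings of the restricted 1-attribute instance on {2,…,2n−1}. -/
/-!
Persons `1` (type `B`) and `2n` (type `A`) rank each other first, because they sit at opposite ends
of the line.  The rest of the argument works for any two people `a`, `b` of a finite set `S` who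
rank each other first.  A matching of `S` without `{a, b}` is blocked by `{a, b}`
(`pair_mem_of_stable`).  Removing `{a, b}` from a stable matching leaves a stable matching of
`S \ {a, b}`, since the other people keep their partners (`IsStable.erase_pair`).  Conversely,
adding `{a, b}` to a stable matching of `S \ {a, b}` creates no blocking pair, since neither `a`
nor `b` can improve (`IsStable.union_pair`).
-/

/-- The two preference types in the 1-attribute stable roommate model. -/
inductive AttrType : Type
  | A : AttrType
  | B : AttrType
  deriving DecidableEq

/-- In the 1-attribute instance with type assignment `t`, person `i`
prefers person `j` to person `k`: type `A` people prefer smaller indices,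
type `B` people prefer larger indices. -/
def Prefers (t : ℕ → AttrType) (i j k : ℕ) : Prop :=
  match t i with
  | AttrType.A => j < k
  | AttrType.B => k < j

/-- `M` is a matching of the people in `S`: a partition of `S` into
unordered pairs. -/
def IsMatching (S : Finset ℕ) (M : Finset (Finset ℕ)) : Prop :=
  (∀ p ∈ M, ∃ i j, i ≠ j ∧ i ∈ S ∧ j ∈ S ∧ p = {i, j}) ∧
  (∀ i ∈ S, ∃! p, p ∈ M ∧ i ∈ p)

/-- The pair `{i, j}` is a blocking pair for the matching `M`:
it is not in `M`, and each of `i`, `j` prefers the other to their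
partner in `M`. -/
def IsBlocking (t : ℕ → AttrType) (M : Finset (Finset ℕ)) (i j : ℕ) : Prop :=
  i ≠ j ∧ ({i, j} : Finset ℕ) ∉ M ∧
  (∀ k, ({i, k} : Finset ℕ) ∈ M → k ≠ i → Prefers t i j k) ∧
  (∀ k, ({j, k} : Finset ℕ) ∈ M → k ≠ j → Prefers t j i k)

/-- `M` is a stable matching of the 1-attribute instance on the set of
people `S` with type assignment `t`. -/
def IsStable (t : ℕ → AttrType) (S : Finset ℕ) (M : Finset (Finset ℕ)) : Prop :=
  IsMatching S M ∧ ∀ i ∈ S, ∀ j ∈ S, ¬ IsBlocking t M i j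

theorem Prefers.asymm {t : ℕ → AttrType} {i j k : ℕ} (h : Prefers t i j k) :
    ¬ Prefers t i k j := by
  unfold Prefers at *
  cases hi : t i <;> simp only [hi] at * <;> omega

theorem IsBlocking.symm {t : ℕ → AttrType} {M : Finset (Finset ℕ)} {i j : ℕ}
    (h : IsBlocking t M i j) : IsBlocking t M j i :=
  ⟨h.1.symm, by rw [Finset.pair_comm]; exact h.2.1, h.2.2.2, h.2.2.1⟩

theorem IsMatching.mem_of_mem {S : Finset ℕ} {M : Finset (Finset ℕ)} (hM : IsMatching S M)
    {p : Finset ℕ} (hp : p ∈ M) {x : ℕ} (hx : x ∈ p) : x ∈ S := by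
  obtain ⟨i, j, -, hi, hj, rfl⟩ := hM.1 p hp
  rcases Finset.mem_insert.1 hx with rfl | hx
  · exact hi
  · rwa [Finset.mem_singleton.1 hx]

theorem IsMatching.eq_of_mem {S : Finset ℕ} {M : Finset (Finset ℕ)} (hM : IsMatching S M)
    {p q : Finset ℕ} (hp : p ∈ M) (hq : q ∈ M) {x : ℕ} (hxp : x ∈ p) (hxq : x ∈ q) : p = q :=
  (hM.2 x (hM.mem_of_mem hp hxp)).unique ⟨hp, hxp⟩ ⟨hq, hxq⟩

/-- `b` is the most-preferred person of `a` within `S`. -/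
def IsTopChoice (t : ℕ → AttrType) (S : Finset ℕ) (a b : ℕ) : Prop :=
  ∀ k ∈ S, k ≠ a → k ≠ b → Prefers t a b k

theorem pair_mem_of_stable {t : ℕ → AttrType} {S : Finset ℕ} {M : Finset (Finset ℕ)} {a b : ℕ}
    (hab : a ≠ b) (ha : a ∈ S) (hb : b ∈ S) (hta : IsTopChoice t S a b) (htb : IsTopChoice t S b a)
    (hM : IsStable t S M) : ({a, b} : Finset ℕ) ∈ M := by
  by_contra hn
  refine hM.2 a ha b hb ⟨hab, hn, fun k hk hka => ?_, fun k hk hkb => ?_⟩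
  · refine hta k (hM.1.mem_of_mem hk (by simp)) hka ?_
    rintro rfl
    exact hn hk
  · refine htb k (hM.1.mem_of_mem hk (by simp)) hkb ?_
    rintro rfl
    exact hn (by rwa [Finset.pair_comm])

theorem IsStable.erase_pair {t : ℕ → AttrType} {S : Finset ℕ} {M : Finset (Finset ℕ)} {a b : ℕ}
    (hM : IsStable t S M) (hp : ({a, b} : Finset ℕ) ∈ M) :
    IsStable t (S \ {a, b}) (M.erase {a, b}) := by
  have key : ∀ p ∈ M, ∀ x ∈ p, x ∈ ({a, b} : Finset ℕ) → p = {a, b} :=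
    fun p hpM x hx hx' => hM.1.eq_of_mem hpM hp hx hx'
  refine ⟨⟨fun p hpM => ?_, fun i hi => ?_⟩, fun i hi j hj hb => ?_⟩
  · obtain ⟨hne, hpM⟩ := Finset.mem_erase.1 hpM
    obtain ⟨i, j, hij, hi, hj, rfl⟩ := hM.1.1 p hpM
    exact ⟨i, j, hij,
      Finset.mem_sdiff.2 ⟨hi, fun h => hne (key _ hpM i (by simp) h)⟩,
      Finset.mem_sdiff.2 ⟨hj, fun h => hne (key _ hpM j (by simp) h)⟩, rfl⟩
  · obtain ⟨hiS, hi⟩ := Finset.mem_sdiff.1 hi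
    obtain ⟨p, ⟨hpM, hip⟩, hu⟩ := hM.1.2 i hiS
    refine ⟨p, ⟨Finset.mem_erase.2 ⟨?_, hpM⟩, hip⟩, fun q hq =>
      hu q ⟨Finset.mem_of_mem_erase hq.1, hq.2⟩⟩
    rintro rfl
    exact hi hip
  · obtain ⟨hiS, hi⟩ := Finset.mem_sdiff.1 hi
    obtain ⟨hjS, hj⟩ := Finset.mem_sdiff.1 hj
    have ne : ∀ x k : ℕ, x ∉ ({a, b} : Finset ℕ) → ({x, k} : Finset ℕ) ≠ {a, b} :=
      fun x k hx h => hx (h ▸ by simp)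
    exact hM.2 i hiS j hjS ⟨hb.1, fun h => hb.2.1 (Finset.mem_erase.2 ⟨ne i j hi, h⟩),
      fun k hk => hb.2.2.1 k (Finset.mem_erase.2 ⟨ne i k hi, hk⟩),
      fun k hk => hb.2.2.2 k (Finset.mem_erase.2 ⟨ne j k hj, hk⟩)⟩

/-- A person matched with their top choice takes part in no blocking pair. -/
theorem IsTopChoice.not_isBlocking {t : ℕ → AttrType} {S : Finset ℕ} {M : Finset (Finset ℕ)}
    {a b j : ℕ} (hab : a ≠ b) (hta : IsTopChoice t S a b) (hp : ({a, b} : Finset ℕ) ∈ M) (hj : j ∈ S) :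
    ¬ IsBlocking t M a j := by
  rintro ⟨haj, hn, h, -⟩
  refine (h b hp hab.symm).asymm (hta j hj haj.symm ?_)
  rintro rfl
  exact hn hp

theorem IsStable.union_pair {t : ℕ → AttrType} {S : Finset ℕ} {M : Finset (Finset ℕ)} {a b : ℕ}
    (hab : a ≠ b) (ha : a ∈ S) (hb : b ∈ S) (hta : IsTopChoice t S a b) (htb : IsTopChoice t S b a)
    (hM : IsStable t (S \ {a, b}) M) : IsStable t S (M ∪ {{a, b}}) := by
  have hmem : ∀ {p : Finset ℕ}, p ∈ M ∪ {{a, b}} ↔ p ∈ M ∨ p = {a, b} := by simp [or_comm]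
  have hp : ({a, b} : Finset ℕ) ∈ M ∪ {{a, b}} := hmem.2 (Or.inr rfl)
  refine ⟨⟨fun p hpM => ?_, fun i hi => ?_⟩, fun i hi j hj hbl => ?_⟩
  · rcases hmem.1 hpM with hpM | rfl
    · obtain ⟨i, j, hij, hi, hj, rfl⟩ := hM.1.1 p hpM
      exact ⟨i, j, hij, (Finset.mem_sdiff.1 hi).1, (Finset.mem_sdiff.1 hj).1, rfl⟩
    · exact ⟨a, b, hab, ha, hb, rfl⟩
  · by_cases hi' : i ∈ ({a, b} : Finset ℕ)
    · refine ⟨{a, b}, ⟨hp, hi'⟩, fun q ⟨hq, hiq⟩ => ?_⟩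
      rcases hmem.1 hq with hq | rfl
      · exact absurd hi' (Finset.mem_sdiff.1 (hM.1.mem_of_mem hq hiq)).2
      · rfl
    · obtain ⟨p, ⟨hpM, hip⟩, hu⟩ := hM.1.2 i (Finset.mem_sdiff.2 ⟨hi, hi'⟩)
      refine ⟨p, ⟨hmem.2 (Or.inl hpM), hip⟩, fun q ⟨hq, hiq⟩ => ?_⟩
      rcases hmem.1 hq with hq | rfl
      · exact hu q ⟨hq, hiq⟩
      · exact absurd hiq hi'
  · have hout : ∀ x y : ℕ, y ∈ S → IsBlocking t (M ∪ {{a, b}}) x y →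
        x ∉ ({a, b} : Finset ℕ) := by
      intro x y hy hxy hx
      rcases Finset.mem_insert.1 hx with rfl | hx
      · exact hta.not_isBlocking hab hp hy hxy
      · obtain rfl := Finset.mem_singleton.1 hx
        exact htb.not_isBlocking hab.symm (by rw [Finset.pair_comm x a]; exact hp) hy hxy
    exact hM.2 i (Finset.mem_sdiff.2 ⟨hi, hout i j hj hbl⟩)
      j (Finset.mem_sdiff.2 ⟨hj, hout j i hi hbl.symm⟩)
      ⟨hbl.1, fun h => hbl.2.1 (hmem.2 (Or.inl h)),
        fun k hk => hbl.2.2.1 k (hmem.2 (Or.inl hk)),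
        fun k hk => hbl.2.2.2 k (hmem.2 (Or.inl hk))⟩

/-- Case (M1): if person 1 has type B and person 2n has type A, they are each
other's most-preferred person, every stable matching contains the pair
{1,2n}, and the stable matchings are exactly the stable matchings of the
restricted instance on {2,…,2n-1} together with the pair {1,2n}. -/
theorem one_attribute_case_opp (n : ℕ) (hn : 2 ≤ n) (t : ℕ → AttrType)
    (h1 : t 1 = AttrType.B) (h2 : t (2 * n) = AttrType.A) :
    (∀ k ∈ Finset.Icc 1 (2 * n), k ≠ 1 → k ≠ 2 * n →
      Prefers t 1 (2 * n) k ∧ Prefers t (2 * n) 1 k) ∧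
    (∀ M : Finset (Finset ℕ), IsStable t (Finset.Icc 1 (2 * n)) M →
      ({1, 2 * n} : Finset ℕ) ∈ M) ∧
    (∀ M : Finset (Finset ℕ), IsStable t (Finset.Icc 1 (2 * n)) M ↔
      ∃ M' : Finset (Finset ℕ), IsStable t (Finset.Icc 2 (2 * n - 1)) M' ∧
        M = M' ∪ {({1, 2 * n} : Finset ℕ)}) := by
  have hab : 1 ≠ 2 * n := by omega
  have ha : 1 ∈ Finset.Icc 1 (2 * n) := Finset.mem_Icc.2 (by omega)
  have hb : 2 * n ∈ Finset.Icc 1 (2 * n) := Finset.mem_Icc.2 (by omega)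
  have hta : IsTopChoice t (Finset.Icc 1 (2 * n)) 1 (2 * n) := by
    intro k hk hk1 hk2
    have := Finset.mem_Icc.1 hk
    simp only [Prefers, h1]
    omega
  have htb : IsTopChoice t (Finset.Icc 1 (2 * n)) (2 * n) 1 := by
    intro k hk hk1 hk2
    have := Finset.mem_Icc.1 hk
    simp only [Prefers, h2]
    omega
  have hS : Finset.Icc 2 (2 * n - 1) = Finset.Icc 1 (2 * n) \ {1, 2 * n} := by
    ext x
    simp only [Finset.mem_sdiff, Finset.mem_Icc, Finset.mem_insert, Finset.mem_singleton]
    omega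
  refine ⟨fun k hk hk1 hk2 => ⟨hta k hk hk1 hk2, htb k hk hk2 hk1⟩,
    fun M hM => pair_mem_of_stable hab ha hb hta htb hM, fun M => ⟨fun hM => ?_, ?_⟩⟩
  · have hp := pair_mem_of_stable hab ha hb hta htb hM
    refine ⟨M.erase {1, 2 * n}, hS ▸ hM.erase_pair hp, ?_⟩
    rw [Finset.union_comm, ← Finset.insert_eq, Finset.insert_erase hp]
  · rintro ⟨M', hM', rfl⟩
    rw [hS] at hM'
    exact hM'.union_pair hab ha hb hta htb
end

section
/- Let n ≥ 3 and let t : {1,…,2n} → {A,B} be a type assignment with t(1)=A, t(2)=B, t(3)=A, t(2n−1)=A, and t(2n)=B. Then every stable matching of the instance contains the pair {1,3}, and the stable matchings of the instance are exactly the sets M' ∪ {{1,3}} where M' ranges over the stable matchings of the restricted 1-attribute instance on {2} ∪ {4,…,2n}. -/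
theorem IsMatching.mem_of_pair {S : Finset ℕ} {M : Finset (Finset ℕ)} (h : IsMatching S M)
    {i k : ℕ} (hk : ({i, k} : Finset ℕ) ∈ M) : i ∈ S ∧ k ∈ S := by
  obtain ⟨a, b, _, ha, hb, e⟩ := h.1 _ hk
  have hi : i ∈ ({a, b} : Finset ℕ) := e ▸ (by simp)
  have hk' : k ∈ ({a, b} : Finset ℕ) := e ▸ (by simp)
  simp only [Finset.mem_insert, Finset.mem_singleton] at hi hk'
  grind

theorem IsMatching.exists_partner {S : Finset ℕ} {M : Finset (Finset ℕ)} (h : IsMatching S M)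
    {i : ℕ} (hi : i ∈ S) : ∃ k, k ≠ i ∧ ({i, k} : Finset ℕ) ∈ M := by
  obtain ⟨p, ⟨hp, hip⟩, _⟩ := h.2 i hi
  obtain ⟨a, b, hab, _, _, rfl⟩ := h.1 p hp
  simp only [Finset.mem_insert, Finset.mem_singleton] at hip
  rcases hip with rfl | rfl
  · exact ⟨b, hab.symm, hp⟩
  · exact ⟨a, hab, by rwa [Finset.pair_comm]⟩

theorem IsMatching.partner_unique {S : Finset ℕ} {M : Finset (Finset ℕ)} (h : IsMatching S M)
    {i k l : ℕ} (hk : ({i, k} : Finset ℕ) ∈ M) (hl : ({i, l} : Finset ℕ) ∈ M)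
    (hki : k ≠ i) : k = l := by
  have e : ({i, k} : Finset ℕ) = {i, l} :=
    (h.2 i (h.mem_of_pair hk).1).unique ⟨hk, by simp⟩ ⟨hl, by simp⟩
  have hk' : k ∈ ({i, l} : Finset ℕ) := e ▸ (by simp)
  simp only [Finset.mem_insert, Finset.mem_singleton] at hk'
  tauto

theorem prefers_of_A {t : ℕ → AttrType} {i j k : ℕ} (h : t i = AttrType.A) :
    Prefers t i j k ↔ j < k := by
  simp [Prefers, h]

theorem prefers_of_B {t : ℕ → AttrType} {i j k : ℕ} (h : t i = AttrType.B) :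
    Prefers t i j k ↔ k < j := by
  simp [Prefers, h]

theorem pair_one_three_mem {n : ℕ} (hn : 3 ≤ n) {t : ℕ → AttrType}
    (h1 : t 1 = AttrType.A) (h2 : t 2 = AttrType.B) (h3 : t 3 = AttrType.A)
    (h4 : t (2 * n - 1) = AttrType.A) {M : Finset (Finset ℕ)}
    (hM : IsStable t (Finset.Icc 1 (2 * n)) M) : ({1, 3} : Finset ℕ) ∈ M := by
  obtain ⟨hm, hs⟩ := hM
  by_contra h13
  by_cases h12 : ({1, 2} : Finset ℕ) ∈ M
  · have h21 : ({2, 1} : Finset ℕ) ∈ M := by rwa [Finset.pair_comm]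
    refine hs 2 (Finset.mem_Icc.2 (by omega)) (2 * n - 1) (Finset.mem_Icc.2 (by omega))
      ⟨by omega, fun h => ?_, fun k hk hk2 => ?_, fun k hk hkn => ?_⟩
    · have := hm.partner_unique h21 h (by omega)
      omega
    · have := hm.partner_unique hk h21 hk2
      rw [prefers_of_B h2]
      omega
    · have hkS := Finset.mem_Icc.1 (hm.mem_of_pair hk).2
      rw [Finset.pair_comm] at hk
      have hk1 : k ≠ 1 := by
        rintro rfl
        have := hm.partner_unique h12 hk (by omega)
        omega
      have hk2 : k ≠ 2 := by
        rintro rfl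
        have := hm.partner_unique h21 hk (by omega)
        omega
      rw [prefers_of_A h4]
      omega
  · refine hs 1 (Finset.mem_Icc.2 (by omega)) 3 (Finset.mem_Icc.2 (by omega))
      ⟨by omega, h13, fun k hk hk1 => ?_, fun k hk hk3 => ?_⟩
    · have hkS := Finset.mem_Icc.1 (hm.mem_of_pair hk).2
      have hk2 : k ≠ 2 := by rintro rfl; exact h12 hk
      have hk3 : k ≠ 3 := by rintro rfl; exact h13 hk
      rw [prefers_of_A h1]
      omega
    · have hkS := Finset.mem_Icc.1 (hm.mem_of_pair hk).2
      have hk1 : k ≠ 1 := by rintro rfl; exact h13 (by rwa [Finset.pair_comm])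
      rw [prefers_of_A h3]
      omega

theorem mem_rest {n i : ℕ} :
    i ∈ insert 2 (Finset.Icc 4 (2 * n)) ↔ i = 2 ∨ (4 ≤ i ∧ i ≤ 2 * n) := by
  simp

theorem pair_ne_one_three {i j : ℕ} (h1 : i ≠ 1) (h3 : i ≠ 3) :
    ({i, j} : Finset ℕ) ≠ {1, 3} := by
  intro e
  have hi : i ∈ ({1, 3} : Finset ℕ) := e ▸ (by simp)
  simp only [Finset.mem_insert, Finset.mem_singleton] at hi
  tauto

theorem IsMatching.erase_one_three {n : ℕ} (hn : 3 ≤ n) {M : Finset (Finset ℕ)}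
    (h : IsMatching (Finset.Icc 1 (2 * n)) M) (h13 : ({1, 3} : Finset ℕ) ∈ M) :
    IsMatching (insert 2 (Finset.Icc 4 (2 * n))) (M.erase {1, 3}) := by
  -- Only the pair `{1, 3}` itself contains 1 or 3.
  have key : ∀ p ∈ M, p ≠ {1, 3} → 1 ∉ p ∧ 3 ∉ p := fun p hp hne =>
    ⟨fun hm => hne ((h.2 1 (Finset.mem_Icc.2 (by omega))).unique ⟨hp, hm⟩ ⟨h13, by simp⟩),
      fun hm => hne ((h.2 3 (Finset.mem_Icc.2 (by omega))).unique ⟨hp, hm⟩ ⟨h13, by simp⟩)⟩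
  refine ⟨fun p hp => ?_, fun i hi => ?_⟩
  · obtain ⟨hne, hp⟩ := Finset.mem_erase.1 hp
    have hk := key p hp hne
    obtain ⟨i, j, hij, hi, hj, rfl⟩ := h.1 p hp
    simp only [Finset.mem_insert, Finset.mem_singleton, Finset.mem_Icc] at hk hi hj
    exact ⟨i, j, hij, mem_rest.2 (by omega), mem_rest.2 (by omega), rfl⟩
  · rw [mem_rest] at hi
    obtain ⟨p, ⟨hp, hip⟩, hu⟩ := h.2 i (Finset.mem_Icc.2 (by omega))
    refine ⟨p, ⟨Finset.mem_erase.2 ⟨?_, hp⟩, hip⟩,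
      fun q hq => hu q ⟨Finset.mem_of_mem_erase hq.1, hq.2⟩⟩
    rintro rfl
    simp only [Finset.mem_insert, Finset.mem_singleton] at hip
    omega

theorem IsMatching.union_one_three {n : ℕ} (hn : 3 ≤ n) {M' : Finset (Finset ℕ)}
    (h : IsMatching (insert 2 (Finset.Icc 4 (2 * n))) M') :
    IsMatching (Finset.Icc 1 (2 * n)) (M' ∪ {({1, 3} : Finset ℕ)}) := by
  have key : ∀ p ∈ M', ∀ i ∈ p, i = 2 ∨ (4 ≤ i ∧ i ≤ 2 * n) := by
    intro p hp i hi
    obtain ⟨a, b, _, ha, hb, rfl⟩ := h.1 p hp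
    simp only [Finset.mem_insert, Finset.mem_singleton] at hi
    rcases hi with rfl | rfl
    · exact mem_rest.1 ha
    · exact mem_rest.1 hb
  refine ⟨fun p hp => ?_, fun i hi => ?_⟩
  · rcases Finset.mem_union.1 hp with hp | hp
    · obtain ⟨a, b, hab, ha, hb, rfl⟩ := h.1 p hp
      rw [mem_rest] at ha hb
      exact ⟨a, b, hab, Finset.mem_Icc.2 (by omega), Finset.mem_Icc.2 (by omega), rfl⟩
    · exact ⟨1, 3, by omega, Finset.mem_Icc.2 (by omega), Finset.mem_Icc.2 (by omega),
        Finset.mem_singleton.1 hp⟩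
  · rw [Finset.mem_Icc] at hi
    by_cases hi13 : i = 1 ∨ i = 3
    · refine ⟨{1, 3}, ⟨by simp, by simpa using hi13⟩, fun q hq => ?_⟩
      rcases Finset.mem_union.1 hq.1 with hq' | hq'
      · have := key q hq' i hq.2
        omega
      · exact Finset.mem_singleton.1 hq'
    · obtain ⟨p, ⟨hp, hip⟩, hu⟩ := h.2 i (mem_rest.2 (by omega))
      refine ⟨p, ⟨Finset.mem_union_left _ hp, hip⟩, fun q hq => ?_⟩
      rcases Finset.mem_union.1 hq.1 with hq' | hq'
      · exact hu q ⟨hq', hq.2⟩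
      · have := hq.2
        rw [Finset.mem_singleton.1 hq'] at this
        exact absurd (by simpa using this) hi13

/-- Blocking by `{i, j}` depends only on the pairs of the matching containing `i` or `j`, so the
pair `{1, 3}` is irrelevant to it when `i, j ∉ {1, 3}`. -/
theorem isBlocking_congr {t : ℕ → AttrType} {M M' : Finset (Finset ℕ)}
    (hMM : ∀ p, p ≠ ({1, 3} : Finset ℕ) → (p ∈ M ↔ p ∈ M')) {i j : ℕ}
    (hi1 : i ≠ 1) (hi3 : i ≠ 3) (hj1 : j ≠ 1) (hj3 : j ≠ 3) :
    IsBlocking t M i j ↔ IsBlocking t M' i j := by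
  simp only [IsBlocking, hMM _ (pair_ne_one_three hi1 hi3), hMM _ (pair_ne_one_three hj1 hj3)]

/-- Neither 1 nor 3 belongs to a blocking pair of `M' ∪ {{1, 3}}`. -/
theorem not_isBlocking_union {n : ℕ} {t : ℕ → AttrType}
    (h1 : t 1 = AttrType.A) (h2 : t 2 = AttrType.B) (h3 : t 3 = AttrType.A)
    {M' : Finset (Finset ℕ)} (h : IsMatching (insert 2 (Finset.Icc 4 (2 * n))) M')
    {i j : ℕ} (hi : i = 1 ∨ i = 3) (hj : 1 ≤ j) :
    ¬ IsBlocking t (M' ∪ {({1, 3} : Finset ℕ)}) i j := by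
  rintro ⟨hij, -, hbi, hbj⟩
  rcases hi with rfl | rfl
  · have hj3 := (prefers_of_A h1).1 (hbi 3 (by simp) (by omega))
    obtain rfl : j = 2 := by omega
    obtain ⟨k, hk2, hk⟩ := h.exists_partner (mem_rest.2 (Or.inl rfl))
    have hkS := mem_rest.1 (h.mem_of_pair hk).2
    have := (prefers_of_B h2).1 (hbj k (Finset.mem_union_left _ hk) hk2)
    omega
  · have := (prefers_of_A h3).1 (hbi 1 (by simp [Finset.pair_comm]) (by omega))
    omega

/-- Case (T3): types 1A, 2B, 3A, (2n-1)A, (2n)B.  Every stable matching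
contains the pair {1,3}, and the stable matchings are exactly the stable
matchings of the restricted instance on {2} ∪ {4,…,2n} together with {1,3}. -/
theorem one_attribute_case_T3 (n : ℕ) (hn : 3 ≤ n) (t : ℕ → AttrType)
    (h1 : t 1 = AttrType.A) (h2 : t 2 = AttrType.B) (h3 : t 3 = AttrType.A)
    (h4 : t (2 * n - 1) = AttrType.A) (h5 : t (2 * n) = AttrType.B) :
    (∀ M : Finset (Finset ℕ), IsStable t (Finset.Icc 1 (2 * n)) M →
      ({1, 3} : Finset ℕ) ∈ M) ∧
    (∀ M : Finset (Finset ℕ), IsStable t (Finset.Icc 1 (2 * n)) M ↔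
      ∃ M' : Finset (Finset ℕ),
        IsStable t (insert 2 (Finset.Icc 4 (2 * n))) M' ∧
        M = M' ∪ {({1, 3} : Finset ℕ)}) := by
  refine ⟨fun M hM => pair_one_three_mem hn h1 h2 h3 h4 hM, fun M => ⟨fun hM => ?_, ?_⟩⟩
  · have h13 := pair_one_three_mem hn h1 h2 h3 h4 hM
    refine ⟨M.erase {1, 3}, ⟨hM.1.erase_one_three hn h13, fun i hi j hj hb => ?_⟩, ?_⟩
    · rw [mem_rest] at hi hj
      refine hM.2 i (Finset.mem_Icc.2 (by omega)) j (Finset.mem_Icc.2 (by omega))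
        ((isBlocking_congr (fun p hp => ?_) ?_ ?_ ?_ ?_).2 hb)
      · simp [hp]
      all_goals omega
    · ext p
      by_cases hp : p = {1, 3} <;> simp [hp, h13]
  · rintro ⟨M', hM', rfl⟩
    refine ⟨hM'.1.union_one_three hn, fun i hi j hj hb => ?_⟩
    rw [Finset.mem_Icc] at hi hj
    by_cases hi13 : i = 1 ∨ i = 3
    · exact not_isBlocking_union h1 h2 h3 hM'.1 hi13 hj.1 hb
    by_cases hj13 : j = 1 ∨ j = 3
    · exact not_isBlocking_union h1 h2 h3 hM'.1 hj13 hi.1 hb.symm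
    refine hM'.2 i (mem_rest.2 (by omega)) j (mem_rest.2 (by omega))
      ((isBlocking_congr (fun p hp => ?_) ?_ ?_ ?_ ?_).1 hb)
    · simp [hp]
    all_goals omega
end

section
/- Let t : {1,…,2n} → {A,B} be a type assignment and let t' : {1,…,2n} → {A,B} be the mirror assignment defined by t'(i) = the opposite type of t(2n+1−i) (swapping A and B). Then the map sending a matching M to {{2n+1−i, 2n+1−j} : {i,j} ∈ M} is a bijection between the stable matchings of the 1-attribute instance determined by t and the stable matchings of the 1-attribute instance determined by t'; in particular the two instances have the same number of stable matchings. -/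
/-- The opposite of a preference type: A ↦ B and B ↦ A. -/
def AttrType.flip : AttrType → AttrType
  | AttrType.A => AttrType.B
  | AttrType.B => AttrType.A

/-- The image of a set of pairs under the reflection `i ↦ 2n+1-i`. -/
def mirrorMatching (n : ℕ) (M : Finset (Finset ℕ)) : Finset (Finset ℕ) :=
  M.image (fun p => p.image (fun i => 2 * n + 1 - i))

lemma mirror_mem {n i : ℕ} (hi : i ∈ Finset.Icc 1 (2 * n)) :
    2 * n + 1 - i ∈ Finset.Icc 1 (2 * n) := by
  simp only [Finset.mem_Icc] at *
  omega

lemma mirror_mirror {n i : ℕ} (hi : i ∈ Finset.Icc 1 (2 * n)) :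
    2 * n + 1 - (2 * n + 1 - i) = i := by
  simp only [Finset.mem_Icc] at *
  omega

lemma image_image_mirror {n : ℕ} {p : Finset ℕ} (hp : p ⊆ Finset.Icc 1 (2 * n)) :
    (p.image (fun i => 2 * n + 1 - i)).image (fun i => 2 * n + 1 - i) = p := by
  rw [Finset.image_image]
  conv_rhs => rw [← Finset.image_id (s := p)]
  exact Finset.image_congr fun i hi => mirror_mirror (hp hi)

lemma IsMatching.subset {S : Finset ℕ} {M : Finset (Finset ℕ)} (hM : IsMatching S M)
    {p : Finset ℕ} (hp : p ∈ M) : p ⊆ S := by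
  obtain ⟨i, j, -, hi, hj, rfl⟩ := hM.1 p hp
  simp [Finset.insert_subset_iff, hi, hj]

lemma mirrorMatching_mirrorMatching {n : ℕ} {M : Finset (Finset ℕ)}
    (hM : IsMatching (Finset.Icc 1 (2 * n)) M) :
    mirrorMatching n (mirrorMatching n M) = M := by
  unfold mirrorMatching
  rw [Finset.image_image]
  conv_rhs => rw [← Finset.image_id (s := M)]
  exact Finset.image_congr fun p hp => image_image_mirror (hM.subset hp)

lemma mem_mirrorMatching {n : ℕ} {M : Finset (Finset ℕ)}
    (hM : IsMatching (Finset.Icc 1 (2 * n)) M) {p : Finset ℕ}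
    (hp : p ⊆ Finset.Icc 1 (2 * n)) :
    p ∈ mirrorMatching n M ↔ p.image (fun i => 2 * n + 1 - i) ∈ M := by
  simp only [mirrorMatching, Finset.mem_image]
  constructor
  · rintro ⟨q, hq, rfl⟩
    rwa [image_image_mirror (hM.subset hq)]
  · intro h
    exact ⟨_, h, image_image_mirror hp⟩

lemma IsMatching.mirror {n : ℕ} {M : Finset (Finset ℕ)}
    (hM : IsMatching (Finset.Icc 1 (2 * n)) M) :
    IsMatching (Finset.Icc 1 (2 * n)) (mirrorMatching n M) := by
  have hpairs : ∀ p ∈ mirrorMatching n M, ∃ i j, i ≠ j ∧ i ∈ Finset.Icc 1 (2 * n) ∧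
      j ∈ Finset.Icc 1 (2 * n) ∧ p = {i, j} := by
    intro p hp
    obtain ⟨q, hq, rfl⟩ := Finset.mem_image.1 hp
    obtain ⟨i, j, hij, hi, hj, rfl⟩ := hM.1 q hq
    refine ⟨_, _, ?_, mirror_mem hi, mirror_mem hj, by simp [Finset.image_insert]⟩
    intro h
    apply hij
    rw [← mirror_mirror hi, h, mirror_mirror hj]
  refine ⟨hpairs, fun i hi => ?_⟩
  obtain ⟨p, ⟨hp, hip⟩, huniq⟩ := hM.2 _ (mirror_mem hi)
  refine ⟨p.image (fun i => 2 * n + 1 - i), ⟨Finset.mem_image_of_mem _ hp, ?_⟩, ?_⟩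
  · exact Finset.mem_image.2 ⟨_, hip, mirror_mirror hi⟩
  · rintro q ⟨hq, hiq⟩
    have hqS : q ⊆ Finset.Icc 1 (2 * n) := by
      obtain ⟨a, b, -, ha, hb, rfl⟩ := hpairs q hq
      simp only [Finset.insert_subset_iff, Finset.singleton_subset_iff]
      exact ⟨ha, hb⟩
    rw [← huniq _ ⟨(mem_mirrorMatching hM hqS).1 hq, Finset.mem_image_of_mem _ hiq⟩,
      image_image_mirror hqS]

/-- Reversing the order and swapping the types cancel out in every preference comparison. -/
lemma prefers_mirror {n : ℕ} {t t' : ℕ → AttrType}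
    (ht' : ∀ i ∈ Finset.Icc 1 (2 * n), t' i = (t (2 * n + 1 - i)).flip)
    {i j k : ℕ} (hi : i ∈ Finset.Icc 1 (2 * n)) (hj : j ∈ Finset.Icc 1 (2 * n))
    (hk : k ∈ Finset.Icc 1 (2 * n)) (h : Prefers t' i j (2 * n + 1 - k)) :
    Prefers t (2 * n + 1 - i) (2 * n + 1 - j) k := by
  unfold Prefers at *
  rw [ht' i hi] at h
  simp only [Finset.mem_Icc] at hj hk
  cases hti : t (2 * n + 1 - i) <;> simp only [hti, AttrType.flip] at h ⊢ <;> omega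

lemma IsStable.mirror {n : ℕ} {t t' : ℕ → AttrType}
    (ht' : ∀ i ∈ Finset.Icc 1 (2 * n), t' i = (t (2 * n + 1 - i)).flip)
    {M : Finset (Finset ℕ)} (hM : IsStable t (Finset.Icc 1 (2 * n)) M) :
    IsStable t' (Finset.Icc 1 (2 * n)) (mirrorMatching n M) := by
  obtain ⟨hM, hstable⟩ := hM
  have hpair : ∀ i ∈ Finset.Icc 1 (2 * n), ∀ j ∈ Finset.Icc 1 (2 * n),
      (({i, j} : Finset ℕ) ∈ mirrorMatching n M ↔
        ({2 * n + 1 - i, 2 * n + 1 - j} : Finset ℕ) ∈ M) := by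
    intro i hi j hj
    rw [mem_mirrorMatching hM (Finset.insert_subset hi (Finset.singleton_subset_iff.2 hj)),
      Finset.image_insert, Finset.image_singleton]
  -- One half of the blocking condition, which is used for both members of the pair.
  have hside : ∀ i ∈ Finset.Icc 1 (2 * n), ∀ j ∈ Finset.Icc 1 (2 * n),
      (∀ k, ({i, k} : Finset ℕ) ∈ mirrorMatching n M → k ≠ i → Prefers t' i j k) →
      ∀ k, ({2 * n + 1 - i, k} : Finset ℕ) ∈ M → k ≠ 2 * n + 1 - i →
        Prefers t (2 * n + 1 - i) (2 * n + 1 - j) k := by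
    intro i hi j hj h k hk hki
    have hkS : k ∈ Finset.Icc 1 (2 * n) := hM.subset hk (by simp)
    refine prefers_mirror ht' hi hj hkS (h _ ?_ ?_)
    · rwa [hpair i hi _ (mirror_mem hkS), mirror_mirror hkS]
    · rintro rfl
      exact hki (mirror_mirror hkS).symm
  refine ⟨hM.mirror, fun i hi j hj hblock => ?_⟩
  obtain ⟨hij, hnot, h1, h2⟩ := hblock
  refine hstable _ (mirror_mem hi) _ (mirror_mem hj) ⟨fun h => hij ?_, ?_,
    hside i hi j hj h1, hside j hj i hi h2⟩
  · rw [← mirror_mirror hi, h, mirror_mirror hj]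
  · rwa [← hpair i hi j hj]

/-- Mirror symmetry: if `t'` is the mirror assignment
`t' i = (t (2n+1-i)).flip`, then reflecting every pair via
`i ↦ 2n+1-i` is a bijection between the stable matchings of the instance
determined by `t` and those of the instance determined by `t'`; in
particular the two instances have the same number of stable matchings. -/
theorem one_attribute_mirror_symmetry (n : ℕ) (t t' : ℕ → AttrType)
    (ht' : ∀ i ∈ Finset.Icc 1 (2 * n), t' i = (t (2 * n + 1 - i)).flip) :
    Set.BijOn
      (fun M : Finset (Finset ℕ) =>
        M.image (fun p => p.image (fun i => 2 * n + 1 - i)))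
      {M | IsStable t (Finset.Icc 1 (2 * n)) M}
      {M | IsStable t' (Finset.Icc 1 (2 * n)) M} ∧
    {M : Finset (Finset ℕ) | IsStable t (Finset.Icc 1 (2 * n)) M}.ncard =
      {M : Finset (Finset ℕ) | IsStable t' (Finset.Icc 1 (2 * n)) M}.ncard := by
  have hback : ∀ i ∈ Finset.Icc 1 (2 * n), t i = (t' (2 * n + 1 - i)).flip := by
    intro i hi
    rw [ht' _ (mirror_mem hi), mirror_mirror hi]
    cases t i <;> rfl
  have hbij : Set.BijOn (mirrorMatching n)
      {M | IsStable t (Finset.Icc 1 (2 * n)) M} {M | IsStable t' (Finset.Icc 1 (2 * n)) M} :=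
    Set.InvOn.bijOn (f' := mirrorMatching n)
      ⟨fun _ hM => mirrorMatching_mirrorMatching hM.1,
        fun _ hM => mirrorMatching_mirrorMatching hM.1⟩
      (fun _ hM => IsStable.mirror ht' hM) (fun _ hM => IsStable.mirror hback hM)
  exact ⟨hbij, hbij.ncard_eq⟩
end
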